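/- Fix q, t ∈ (0,1). Let A_{q,t} be the ℂ-algebra presented by two generators z, w subject to the single relation w·z = q²·z·w + (1 - q²)·1 + (t·(1 - q²)/(1 - t))·(1 - z·w)·(1 - w·z), realized as the quotient (RingQuot) of the free ℂ-algebra on two generators by this relation. Let T be the bounded operator on ℓ²(ℕ, ℂ) with T δ_m = √(λ_{m+1}) · δ_{m+1}, where λ_m = (1 - q^{2m})/(1 - t·q^{2m}). Then there exists a ℂ-algebra homomorphism π from A_{q,t} to the algebra of bounded operators on ℓ²(ℕ, ℂ) with π(z) = T and π(w) = T*; in particular π(w) is the adjoint of π(z). -/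

import Mathlib

/-- `ℓ²(ℕ, ℂ)`. -/
noncomputable abbrev QDisc.H : Type := lp (fun _ : ℕ => ℂ) 2

/-- The standard orthonormal basis vector `δ_m` of `ℓ²(ℕ, ℂ)`. -/
noncomputable def QDisc.δ (m : ℕ) : QDisc.H := lp.single 2 m (1 : ℂ)

/-- The generator `z` of the free algebra on two generators. -/
noncomputable def QDisc.z : FreeAlgebra ℂ (Fin 2) := FreeAlgebra.ι ℂ (0 : Fin 2)

/-- The generator `w` (playing the role of `z*`) of the free algebra on two generators. -/
noncomputable def QDisc.w : FreeAlgebra ℂ (Fin 2) := FreeAlgebra.ι ℂ (1 : Fin 2)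

/-- The two-parameter quantum disc relation (relation (3) of the paper):
`w z = q² z w + (1 - q²) 1 + (t(1-q²)/(1-t)) (1 - z w)(1 - w z)`. -/
def QDisc.relDisc (q t : ℝ) : FreeAlgebra ℂ (Fin 2) → FreeAlgebra ℂ (Fin 2) → Prop :=
  fun a b => a = QDisc.w * QDisc.z ∧
    b = ((q ^ 2 : ℝ) : ℂ) • (QDisc.z * QDisc.w) + ((1 - q ^ 2 : ℝ) : ℂ) • 1 +
      ((t * (1 - q ^ 2) / (1 - t) : ℝ) : ℂ) •
        ((1 - QDisc.z * QDisc.w) * (1 - QDisc.w * QDisc.z))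

namespace QDisc

theorem inner_δ_left (m : ℕ) (x : H) : inner ℂ (δ m) x = x m := by
  simp [δ, lp.inner_single_left]

theorem δ_apply (m n : ℕ) : (δ m : ℕ → ℂ) n = if m = n then 1 else 0 := by
  simp [δ, Pi.single_apply, eq_comm]

theorem clm_ext_δ {A B : H →L[ℂ] H} (h : ∀ m, A (δ m) = B (δ m)) : A = B := by
  refine lp.ext_continuousLinearMap (by simp) fun m => ?_
  ext1
  exact h m

theorem adjoint_weightedShift_apply {T : H →L[ℂ] H} {a : ℕ → ℝ}
    (hT : ∀ m, T (δ m) = (a m : ℂ) • δ (m + 1)) (x : H) (n : ℕ) :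
    (ContinuousLinearMap.adjoint T x : ℕ → ℂ) n = (a n : ℂ) * x (n + 1) := by
  rw [← inner_δ_left, ContinuousLinearMap.adjoint_inner_right, hT, inner_smul_left, inner_δ_left,
    Complex.conj_ofReal]

theorem adjoint_weightedShift_δ_zero {T : H →L[ℂ] H} {a : ℕ → ℝ}
    (hT : ∀ m, T (δ m) = (a m : ℂ) • δ (m + 1)) :
    ContinuousLinearMap.adjoint T (δ 0) = 0 := by
  ext n
  simp [adjoint_weightedShift_apply hT, δ_apply]

theorem adjoint_weightedShift_δ_succ {T : H →L[ℂ] H} {a : ℕ → ℝ}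
    (hT : ∀ m, T (δ m) = (a m : ℂ) • δ (m + 1)) (m : ℕ) :
    ContinuousLinearMap.adjoint T (δ (m + 1)) = (a m : ℂ) • δ m := by
  ext n
  by_cases h : m = n <;> simp [adjoint_weightedShift_apply hT, δ_apply, h, -Complex.coe_smul]

theorem adjoint_mul_weightedShift_δ {T : H →L[ℂ] H} {a : ℕ → ℝ}
    (hT : ∀ m, T (δ m) = (a m : ℂ) • δ (m + 1)) (m : ℕ) :
    (ContinuousLinearMap.adjoint T * T) (δ m) = ((a m ^ 2 : ℝ) : ℂ) • δ m := by
  rw [mul_apply_eq_comp, hT, map_smul, adjoint_weightedShift_δ_succ hT, smul_smul]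
  push_cast
  rw [sq]

theorem weightedShift_mul_adjoint_δ_zero {T : H →L[ℂ] H} {a : ℕ → ℝ}
    (hT : ∀ m, T (δ m) = (a m : ℂ) • δ (m + 1)) :
    (T * ContinuousLinearMap.adjoint T) (δ 0) = 0 := by
  rw [mul_apply_eq_comp, adjoint_weightedShift_δ_zero hT, map_zero]

theorem weightedShift_mul_adjoint_δ_succ {T : H →L[ℂ] H} {a : ℕ → ℝ}
    (hT : ∀ m, T (δ m) = (a m : ℂ) • δ (m + 1)) (m : ℕ) :
    (T * ContinuousLinearMap.adjoint T) (δ (m + 1)) = ((a m ^ 2 : ℝ) : ℂ) • δ (m + 1) := by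
  rw [mul_apply_eq_comp, adjoint_weightedShift_δ_succ hT, map_smul, hT, smul_smul]
  push_cast
  rw [sq]

/-- The scalar recursion satisfied by `λ_m = (1 - x) / (1 - t x)` at `x = q ^ (2 m)`. -/
theorem weight_recursion {q t x : ℝ} (ht : 1 - t ≠ 0) (hx : 1 - t * x ≠ 0)
    (hqx : 1 - t * (q ^ 2 * x) ≠ 0) :
    (1 - q ^ 2 * x) / (1 - t * (q ^ 2 * x)) =
      q ^ 2 * ((1 - x) / (1 - t * x)) + (1 - q ^ 2) +
        t * (1 - q ^ 2) / (1 - t) * ((1 - (1 - x) / (1 - t * x)) *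
          (1 - (1 - q ^ 2 * x) / (1 - t * (q ^ 2 * x)))) := by
  have h₁ : 1 - (1 - x) / (1 - t * x) = x * (1 - t) / (1 - t * x) := by
    rw [eq_div_iff hx, sub_mul, div_mul_cancel₀ _ hx]
    ring
  have h₂ : 1 - (1 - q ^ 2 * x) / (1 - t * (q ^ 2 * x)) =
      q ^ 2 * x * (1 - t) / (1 - t * (q ^ 2 * x)) := by
    rw [eq_div_iff hqx, sub_mul, div_mul_cancel₀ _ hqx]
    ring
  rw [h₁, h₂]
  rw [div_mul_div_comm, div_mul_div_comm, mul_div_assoc', div_add' _ _ _ hx,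
    div_add_div _ _ hx (mul_ne_zero ht (mul_ne_zero hx hqx)),
    div_eq_div_iff hqx (mul_ne_zero hx (mul_ne_zero ht (mul_ne_zero hx hqx)))]
  ring

end QDisc

open QDisc in
/-- The weighted shift `T δ_m = √(λ_{m+1}) δ_{m+1}` and its adjoint define a
representation of the two-parameter quantum disc algebra
`A_{q,t} = ℂ⟨z, w⟩ / (wz = q² zw + (1-q²) + (t(1-q²)/(1-t))(1-zw)(1-wz))` on `ℓ²(ℕ, ℂ)`. -/
theorem quantum_disc_algebra_representation
    (q t : ℝ) (hq0 : 0 < q) (hq1 : q < 1) (ht0 : 0 < t) (ht1 : t < 1)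
    (lam : ℕ → ℝ)
    (hlam : ∀ m : ℕ, lam m = (1 - q ^ (2 * m)) / (1 - t * q ^ (2 * m)))
    (T : H →L[ℂ] H)
    (hT : ∀ m : ℕ, T (δ m) = (Real.sqrt (lam (m + 1)) : ℂ) • δ (m + 1)) :
    ∃ φ : RingQuot (relDisc q t) →ₐ[ℂ] (H →L[ℂ] H),
      φ (RingQuot.mkAlgHom ℂ (relDisc q t) z) = T ∧
      φ (RingQuot.mkAlgHom ℂ (relDisc q t) w) = ContinuousLinearMap.adjoint T := by
  have hpow (m : ℕ) : q ^ (2 * m) ≤ 1 := pow_le_one₀ hq0.le hq1.le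
  have hden (m : ℕ) : 0 < 1 - t * q ^ (2 * m) := by nlinarith [hpow m]
  have hlam_nonneg (m : ℕ) : 0 ≤ lam m := by
    rw [hlam]
    exact div_nonneg (sub_nonneg.2 (hpow m)) (hden m).le
  have hlam_zero : lam 0 = 0 := by simp [hlam]
  have hrec (m : ℕ) : lam (m + 1) = q ^ 2 * lam m + (1 - q ^ 2) +
      t * (1 - q ^ 2) / (1 - t) * ((1 - lam m) * (1 - lam (m + 1))) := by
    have hsucc : q ^ (2 * (m + 1)) = q ^ 2 * q ^ (2 * m) := by ring
    have hden_succ := (hden (m + 1)).ne'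
    rw [hsucc] at hden_succ
    rw [hlam m, hlam (m + 1), hsucc]
    exact weight_recursion (sub_pos.2 ht1).ne' (hden m).ne' hden_succ
  have hwz (m : ℕ) : (ContinuousLinearMap.adjoint T * T) (δ m) = (lam (m + 1) : ℂ) • δ m := by
    rw [adjoint_mul_weightedShift_δ (a := fun m => √(lam (m + 1))) hT,
      Real.sq_sqrt (hlam_nonneg _)]
  have hzw (m : ℕ) : (T * ContinuousLinearMap.adjoint T) (δ m) = (lam m : ℂ) • δ m := by
    cases m with
    | zero =>
      rw [weightedShift_mul_adjoint_δ_zero (a := fun m => √(lam (m + 1))) hT, hlam_zero]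
      simp
    | succ m =>
      rw [weightedShift_mul_adjoint_δ_succ (a := fun m => √(lam (m + 1))) hT,
        Real.sq_sqrt (hlam_nonneg _)]
  have hrel : ContinuousLinearMap.adjoint T * T =
      ((q ^ 2 : ℝ) : ℂ) • (T * ContinuousLinearMap.adjoint T) + ((1 - q ^ 2 : ℝ) : ℂ) • 1 +
        ((t * (1 - q ^ 2) / (1 - t) : ℝ) : ℂ) •
          ((1 - T * ContinuousLinearMap.adjoint T) * (1 - ContinuousLinearMap.adjoint T * T)) := by
    refine clm_ext_δ fun m => ?_
    generalize ContinuousLinearMap.adjoint T * T = A at hwz ⊢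
    generalize T * ContinuousLinearMap.adjoint T = B at hzw ⊢
    simp only [add_apply, smul_apply, sub_apply, mul_apply_eq_comp,
      one_apply_eq_self, map_sub, map_smul, hwz, hzw]
    have hrec_complex := congrArg (fun r : ℝ => (r : ℂ)) (hrec m)
    simp only [Complex.ofReal_add, Complex.ofReal_mul, Complex.ofReal_sub, Complex.ofReal_one]
      at hrec_complex
    refine (congrArg (· • δ m) hrec_complex).trans ?_
    module
  refine ⟨RingQuot.liftAlgHom ℂ
    ⟨FreeAlgebra.lift ℂ ![T, ContinuousLinearMap.adjoint T], ?_⟩, ?_, ?_⟩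
  · rintro _ _ ⟨rfl, rfl⟩
    simpa [z, w] using hrel
  · simp [z]
  · simp [w]
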